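/- Let Γ be a finitely generated group, K a field, n ≥ 1, and φ : Γ → GL(n, K) a group homomorphism. Then the intersection of all normal subgroups of Γ of finite index is contained in the kernel of φ. -/

import Mathlib

/-!
This is Malcev's theorem that finitely generated linear groups are residually finite. Suppose
`φ g ≠ 1`, and let `a ≠ 0` be an entry of `φ g - 1`. Let `A` be the subring of `K` generated by
`a⁻¹` and the finitely many entries of `φ s` and `(φ s)⁻¹`, for `s` in a finite generating set.
Then `φ` takes values in `GL(n, A)`, so `a` is a unit of `A`.

The ring `ℤ` is Jacobson, so by Zariski's lemma the residue field `A ⧸ m` of a maximal ideal is a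
finitely generated abelian group; it cannot have characteristic zero, as it would then be a field
integral over `ℤ`, so it is finite (`finite_of_finiteType_int`). Reduction modulo `m` sends
`Γ` to the finite group `GL(n, A ⧸ m)`, and `g` is not in the kernel, because the unit `a` is not
in `m`. This kernel is a normal subgroup of finite index which does not contain `g`.
-/

/-- Nonzero prime ideals of `ℤ` are maximal, so only `⊥` needs an argument: a nonzero integer `x`
avoids the maximal ideal generated by any prime larger than `|x|`. -/
lemma isJacobsonRing_int : IsJacobsonRing ℤ := by
  rw [isJacobsonRing_iff_prime_eq]
  intro P hP
  by_cases h : P = ⊥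
  · subst h
    rw [eq_bot_iff]
    intro x hx
    rw [Ideal.mem_bot]
    by_contra hx0
    obtain ⟨p, hp, hpp⟩ := Nat.exists_infinite_primes (x.natAbs + 1)
    have hprime : Prime (p : ℤ) := Nat.prime_iff_prime_int.mp hpp
    have hmax : (Ideal.span {(p : ℤ)}).IsMaximal :=
      PrincipalIdealRing.isMaximal_of_irreducible hprime.irreducible
    have hmem : x ∈ Ideal.span {(p : ℤ)} := (Ideal.mem_sInf.mp hx) ⟨bot_le, hmax⟩
    rw [Ideal.mem_span_singleton] at hmem
    have hle := Nat.le_of_dvd (Int.natAbs_pos.mpr hx0) (Int.natCast_dvd.mp hmem)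
    omega
  · have := hP.isMaximal h
    exact Ideal.jacobson_eq_self_of_isMaximal

/-- The arithmetic form of the Nullstellensatz: a field that is finitely generated as a ring is
finite. -/
lemma finite_of_finiteType_int (k : Type*) [Field k] [Algebra.FiniteType ℤ k] : Finite k := by
  have := isJacobsonRing_int
  have hfin : Module.Finite ℤ k := finite_of_finite_type_of_isJacobsonRing ℤ k
  obtain ⟨p, hp⟩ := CharP.exists k
  rcases CharP.char_is_prime_or_zero k p with hpp | rfl
  · have : Fact p.Prime := ⟨hpp⟩
    let := ZMod.algebra k p
    have : Module.Finite (ZMod p) k := Module.Finite.of_restrictScalars_finite ℤ (ZMod p) k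
    exact Module.finite_of_finite (ZMod p)
  · have := CharP.charP_to_charZero k
    exact absurd (isField_of_isIntegral_of_isField
      (FaithfulSMul.algebraMap_injective ℤ k) (Field.toIsField k)) Int.not_isField

/-- A linear representation over `K` of a group generated by `S` factors through `GL(n, A)` as soon
as the subring `A` contains the entries of `φ s` and of `(φ s)⁻¹` for all `s ∈ S`. -/
lemma exists_lift_to_subring {Γ K : Type*} [Group Γ] [Field K] {n : ℕ} (φ : Γ →* GL (Fin n) K)
    (A : Subalgebra ℤ K) (S : Set Γ) (hS : Subgroup.closure S = ⊤)
    (hA : ∀ s ∈ S, ∀ i j, (φ s).val i j ∈ A ∧ (φ s)⁻¹.val i j ∈ A) :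
    ∃ ψ : Γ →* GL (Fin n) A, ∀ g i j, (((ψ g).val i j : A) : K) = (φ g).val i j := by
  let f : GL (Fin n) A →* GL (Fin n) K := Matrix.GeneralLinearGroup.map A.val.toRingHom
  have hf : ∀ x i j, (f x).val i j = ((x.val i j : A) : K) := fun x i j => rfl
  have hinj : Function.Injective f := by
    intro x y hxy
    apply Units.ext
    ext i j
    rw [← hf, ← hf, hxy]
  have hrange : ∀ g, φ g ∈ f.range := by
    have hle : Subgroup.closure S ≤ f.range.comap φ := by
      rw [Subgroup.closure_le]
      intro s hs
      have hval : Function.Injective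
          (fun M : Matrix (Fin n) (Fin n) A => M.map A.val.toRingHom) :=
        Matrix.map_injective Subtype.val_injective
      refine ⟨⟨Matrix.of fun i j => ⟨_, (hA s hs i j).1⟩,
        Matrix.of fun i j => ⟨_, (hA s hs i j).2⟩, ?_, ?_⟩, ?_⟩
      · apply hval
        simp only [Matrix.map_mul]
        rw [Matrix.map_one _ (map_zero _) (map_one _)]
        exact (φ s).mul_inv
      · apply hval
        simp only [Matrix.map_mul]
        rw [Matrix.map_one _ (map_zero _) (map_one _)]
        exact (φ s).inv_mul
      · apply Units.ext
        ext i j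
        rfl
    intro g
    exact hle (hS ▸ Subgroup.mem_top g)
  refine ⟨(MonoidHom.ofInjective hinj).symm.toMonoidHom.comp (φ.codRestrict f.range hrange), ?_⟩
  intro g i j
  rw [← hf]
  have h := (MonoidHom.ofInjective hinj).apply_symm_apply (φ.codRestrict f.range hrange g)
  exact congrArg (fun x : f.range => x.val.val i j) h

/-- For a finitely generated group `Γ`, any homomorphism to `GL(n, K)` over a field `K` kills
the intersection of all finite-index normal subgroups of `Γ`. -/
theorem residual_kernel_le_ker_linear_rep
    (Γ : Type*) [Group Γ] (hfg : Group.FG Γ)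
    (K : Type*) [Field K] (n : ℕ) (hn : 1 ≤ n)
    (φ : Γ →* GL (Fin n) K) :
    sInf {H : Subgroup Γ | H.Normal ∧ H.FiniteIndex} ≤ φ.ker := by
  intro g hg
  rw [MonoidHom.mem_ker]
  by_contra hne
  obtain ⟨i, j, hij⟩ : ∃ i j, (φ g).val i j - (1 : Matrix (Fin n) (Fin n) K) i j ≠ 0 := by
    by_contra! h
    exact hne (Units.ext (Matrix.ext fun i j => sub_eq_zero.mp (h i j)))
  obtain ⟨_, S, _, hS⟩ := Group.fg_iff'.mp hfg
  set a := (φ g).val i j - (1 : Matrix (Fin n) (Fin n) K) i j with ha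
  let T : Set K := insert a⁻¹ (⋃ s ∈ S, ⋃ i, ⋃ j, {(φ s).val i j, (φ s)⁻¹.val i j})
  have hT : T.Finite := by
    refine Set.Finite.insert _ (Set.Finite.biUnion S.finite_toSet fun s _ =>
      Set.finite_iUnion fun i => Set.finite_iUnion fun j => Set.toFinite _)
  let A : Subalgebra ℤ K := Algebra.adjoin ℤ T
  have hft : Algebra.FiniteType ℤ A :=
    A.fg_iff_finiteType.mp (Subalgebra.fg_def.mpr ⟨T, hT, rfl⟩)
  obtain ⟨ψ, hψ⟩ := exists_lift_to_subring φ A S hS (fun s hs i j => by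
    constructor <;> refine Algebra.subset_adjoin (Set.mem_insert_of_mem _ ?_) <;>
      simp only [Set.mem_iUnion] <;> exact ⟨s, hs, i, j, by simp⟩)
  let b : A := (ψ g).val i j - (1 : Matrix (Fin n) (Fin n) A) i j
  have hb : (b : K) = a := by
    have h1 : (((1 : Matrix (Fin n) (Fin n) A) i j : A) : K) = (1 : Matrix _ _ K) i j := by
      by_cases h : i = j <;> simp [Matrix.one_apply, h]
    simp only [b, AddSubgroupClass.coe_sub, hψ, h1, ha]
  let c : A := ⟨a⁻¹, Algebra.subset_adjoin (Set.mem_insert _ _)⟩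
  have hunit : IsUnit b := by
    refine IsUnit.of_mul_eq_one c (Subtype.ext ?_)
    rw [MulMemClass.coe_mul, hb]
    exact mul_inv_cancel₀ hij
  obtain ⟨m, hm⟩ := Ideal.exists_maximal A
  have hfinite : Finite (A ⧸ m) := by
    have : Algebra.FiniteType ℤ (A ⧸ m) := hft.of_surjective (Ideal.Quotient.mkₐ ℤ m)
      (Ideal.Quotient.mkₐ_surjective ℤ m)
    -- The field structure is passed explicitly because the `ℤ`-algebra structure it induces is not
    -- syntactically that of the quotient ring.
    exact @finite_of_finiteType_int (A ⧸ m) (Ideal.Quotient.field m) this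
  let θ : Γ →* GL (Fin n) (A ⧸ m) :=
    (Matrix.GeneralLinearGroup.map (Ideal.Quotient.mk m)).comp ψ
  have hmem : g ∈ θ.ker :=
    (Subgroup.mem_sInf.mp hg) θ.ker ⟨inferInstance, Subgroup.finiteIndex_ker θ⟩
  have hentry : Ideal.Quotient.mk m ((ψ g).val i j) = (1 : Matrix (Fin n) (Fin n) (A ⧸ m)) i j :=
    congrArg (fun x : GL (Fin n) (A ⧸ m) => x.val i j) (MonoidHom.mem_ker.mp hmem)
  have hbm : b ∈ m := by
    rw [← Ideal.Quotient.eq_zero_iff_mem, map_sub, hentry]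
    by_cases h : i = j <;> simp [Matrix.one_apply, h]
  exact hm.ne_top (Ideal.eq_top_of_isUnit_mem m hbm hunit)
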